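/- arXiv:2602.08258 — 2 statements merged into one kernel-verified Lean document; each statement's English description precedes it below -/
import Mathlib

section
/- Let R be a one-dimensional Cohen-Macaulay local ring with maximal ideal m, I an m-primary ideal, and M a nonzero finitely generated torsion-free R-module. Then M has minimal multiplicity with respect to I (i.e., e_R(I,M) = length_R(IM/I^2M)) if and only if I^2 M = x I M for some minimal reduction (x) of I. -/
/-!
Let `(x)` be a principal reduction of `I`. As `I` contains a power of a nonzerodivisor, `x` is a
nonzerodivisor, hence acts injectively on `M`. For such `x` and any submodule `P` of finite colength,
`ℓ(P / xP) = ℓ(M / xM)` (`relLen_smul`). Applied to `P = IⁿM` with `n` large, where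
`Iⁿ⁺¹M = x IⁿM`, this gives `e(I, M) = ℓ(M / xM)` (`hsMult_eq`); applied to `P = IM` it gives
`e(I, M) = ℓ(IM / xIM) = ℓ(IM / I²M) + ℓ(I²M / xIM)`. All lengths are finite, so
`e(I, M) = ℓ(IM / I²M)` if and only if `I²M = xIM` (`hsMult_eq_qlen_iff`).

It remains to produce a principal reduction (`exists_isMinimalReduction`). For a nonzerodivisor
`a ∈ 𝔪` one has `ℓ(Iⁿ / 𝔪Iⁿ) ≤ ℓ(Iⁿ / aIⁿ) = ℓ(R / aR)`, a bound independent of `n`. So for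
`x, y ∈ I` and `N` large the monomials of degree `N` in `x, y` satisfy a relation modulo `𝔪 I ^ N`
with some unit coefficient (`exists_form_mem`). Since the residue field is infinite, there is `t ∈ R`
for which this relation makes `x` and `y` nilpotent in the fiber ring `⨁ Iⁿ / 𝔪Iⁿ` modulo the
degree one class of `x - t y` (`exists_reesLin_mem_radical`). Absorbing the generators of `I` one by
one gives a single `z ∈ I` modulo which the fiber ring vanishes in large degrees, that is
`Iⁿ⁺¹ = z Iⁿ + 𝔪 Iⁿ⁺¹`, and Nakayama's lemma finishes. The computations in the fiber ring are done
in the Rees algebra, modulo the ideal `(𝔪, zT)`.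
-/

open IsLocalRing Filter

section Defs

variable (R : Type*) [CommRing R]

/-- The length of an `R`-module `M`: the Krull dimension of its lattice of submodules. -/
noncomputable def mlen (M : Type*) [AddCommGroup M] [Module R M] : WithBot ℕ∞ :=
  Order.krullDim (Submodule R M)

/-- The minimal number of generators of an `R`-module. -/
noncomputable def mu (M : Type*) [AddCommGroup M] [Module R M] : ℕ :=
  sInf {n | ∃ s : Finset M, s.card = n ∧ Submodule.span R (s : Set M) = ⊤}

/-- The Hilbert–Samuel multiplicity `e_R(I, M)` of a finitely generated module over a
one-dimensional local ring with respect to an `m`-primary ideal `I`: the eventual value of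
`ℓ(M/I^{n+1}M) - ℓ(M/I^n M)`. -/
noncomputable def hsMult (I : Ideal R) (M : Type*) [AddCommGroup M] [Module R M] : ℕ∞ := by
  classical
  exact if h : ∃ e : ℕ∞, ∀ᶠ n in atTop,
      mlen R (M ⧸ (I ^ (n + 1) • (⊤ : Submodule R M))) =
        mlen R (M ⧸ (I ^ n • (⊤ : Submodule R M))) + (e : WithBot ℕ∞)
    then h.choose else 0

/-- The length of the subquotient `P/Q` for submodules `Q ⊆ P` of `M`. -/
noncomputable def qlen {M : Type*} [AddCommGroup M] [Module R M]
    (P Q : Submodule R M) : WithBot ℕ∞ :=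
  mlen R (↥P ⧸ Q.comap P.subtype)

/-- `(x)` is a minimal reduction of `I` (one-dimensional situation): a principal subideal with
`I^{n+1} = x I^n` for all large `n`. -/
def IsMinimalReduction (I : Ideal R) (x : R) : Prop :=
  x ∈ I ∧ ∃ N : ℕ, ∀ n ≥ N, I ^ (n + 1) = Ideal.span {x} * I ^ n

/-- A module is torsion-free if non zero-divisors of `R` act injectively. -/
def TorsionFree (M : Type*) [AddCommGroup M] [Module R M] : Prop :=
  ∀ r ∈ nonZeroDivisors R, ∀ m : M, r • m = 0 → m = 0

/-- The embedding dimension of a local ring: the minimal number of generators of the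
maximal ideal. -/
noncomputable def embdim (R : Type*) [CommRing R] [IsLocalRing R] : ℕ :=
  sInf {n | ∃ s : Finset R, s.card = n ∧ Ideal.span (s : Set R) = maximalIdeal R}

/-- A Noetherian local ring is regular iff its embedding dimension equals its Krull
dimension. -/
def IsRegularLocal (R : Type*) [CommRing R] [IsLocalRing R] : Prop :=
  ((embdim R : ℕ∞) : WithBot ℕ∞) = ringKrullDim R

/-- The colon `(J :_Q K)` of two `R`-submodules of an `R`-algebra `Q`. -/
def colonQ {Q : Type*} [CommRing Q] [Algebra R Q] (J K : Submodule R Q) : Submodule R Q where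
  carrier := {q | ∀ k ∈ K, q * k ∈ J}
  add_mem' := by
    intro a b ha hb k hk
    simpa [add_mul] using J.add_mem (ha k hk) (hb k hk)
  zero_mem' := by intro k hk; rw [zero_mul]; exact J.zero_mem
  smul_mem' := by
    intro c a ha k hk
    simpa [smul_mul_assoc] using J.smul_mem c (ha k hk)

end Defs

/-! ### Lengths of subquotients -/

/-- The length of `P / (P ∩ Q)`, i.e. of `P / Q` when `Q ≤ P`, as an extended natural number. -/
noncomputable def relLen {R M : Type*} [CommRing R] [AddCommGroup M] [Module R M]
    (P Q : Submodule R M) : ℕ∞ :=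
  Module.length R (↥P ⧸ Q.comap P.subtype)

lemma qlen_eq_relLen {R M : Type*} [CommRing R] [AddCommGroup M] [Module R M]
    (P Q : Submodule R M) : qlen R P Q = (relLen P Q : WithBot ℕ∞) :=
  (Module.coe_length _ _).symm

lemma relLen_top {R M : Type*} [CommRing R] [AddCommGroup M] [Module R M]
    (Q : Submodule R M) : relLen ⊤ Q = Module.length R (M ⧸ Q) := by
  refine LinearEquiv.length_eq (Submodule.Quotient.equiv _ _ Submodule.topEquiv ?_)
  ext y
  simp

lemma mlen_quotient {R M : Type*} [CommRing R] [AddCommGroup M] [Module R M]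
    (Q : Submodule R M) : mlen R (M ⧸ Q) = (relLen ⊤ Q : WithBot ℕ∞) := by
  rw [relLen_top, Module.coe_length]; rfl

lemma relLen_add {R M : Type*} [CommRing R] [AddCommGroup M] [Module R M]
    {A B C : Submodule R M} (hCB : C ≤ B) (hBA : B ≤ A) :
    relLen A C = relLen B C + relLen A B := by
  refine Module.length_eq_add_of_exact
    (Submodule.mapQ _ _ (Submodule.inclusion hBA) (show _ ≤ Submodule.comap _ _ from fun x hx => hx))
    (Submodule.mapQ _ _ LinearMap.id (show _ ≤ Submodule.comap _ _ from fun x hx => hCB hx)) ?_ ?_ ?_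
  · rw [← LinearMap.ker_eq_bot, LinearMap.ker_eq_bot']
    intro y hy
    obtain ⟨b, rfl⟩ := Submodule.Quotient.mk_surjective _ y
    simp only [Submodule.mapQ_apply, Submodule.Quotient.mk_eq_zero] at hy ⊢
    exact hy
  · intro y
    obtain ⟨b, rfl⟩ := Submodule.Quotient.mk_surjective _ y
    exact ⟨Submodule.Quotient.mk b, by simp⟩
  · intro y
    obtain ⟨a, rfl⟩ := Submodule.Quotient.mk_surjective _ y
    simp only [Submodule.mapQ_apply, Submodule.Quotient.mk_eq_zero, LinearMap.id_apply]
    constructor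
    · intro h
      exact ⟨Submodule.Quotient.mk ⟨a, h⟩, by rw [Submodule.mapQ_apply]; rfl⟩
    · rintro ⟨z, hz⟩
      obtain ⟨b, rfl⟩ := Submodule.Quotient.mk_surjective _ z
      rw [Submodule.mapQ_apply, Submodule.Quotient.eq] at hz
      have h1 : (b : M) - a ∈ C := hz
      have h2 := B.sub_mem b.2 (hCB h1)
      simpa using h2

lemma relLen_map {R M N : Type*} [CommRing R] [AddCommGroup M] [Module R M]
    [AddCommGroup N] [Module R N] (f : M →ₗ[R] N) (hf : Function.Injective f)
    (A B : Submodule R M) : relLen (A.map f) (B.map f) = relLen A B := by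
  refine (LinearEquiv.length_eq
    (Submodule.Quotient.equiv _ _ (Submodule.equivMapOfInjective f hf A) ?_)).symm
  ext ⟨y, hy⟩
  obtain ⟨a, ha, rfl⟩ := hy
  simp only [Submodule.mem_map, Submodule.mem_comap, Submodule.subtype_apply]
  constructor
  · rintro ⟨b, hb, hab⟩
    exact ⟨b, hb, congrArg Subtype.val hab⟩
  · rintro ⟨b, hb, hab⟩
    obtain rfl := hf hab
    exact ⟨⟨b, ha⟩, hb, rfl⟩

lemma relLen_eq_zero {R M : Type*} [CommRing R] [AddCommGroup M] [Module R M]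
    {A B : Submodule R M} : relLen A B = 0 ↔ A ≤ B := by
  rw [relLen, Module.length_eq_zero_iff, Submodule.Quotient.subsingleton_iff,
    Submodule.comap_subtype_eq_top]

/-- The key length identity: if `x` acts injectively on `M` then `ℓ(P / xP) = ℓ(M / xM)` for every
submodule `P` of finite colength, since both complete `ℓ(M / P) = ℓ(xM / xP)` to `ℓ(M / xP)`. -/
lemma relLen_smul {R M : Type*} [CommRing R] [AddCommGroup M] [Module R M]
    {x : R} (hx : ∀ m : M, x • m = 0 → m = 0) (P : Submodule R M) (hP : relLen ⊤ P ≠ ⊤) :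
    relLen P (Ideal.span {x} • P) = relLen ⊤ (Ideal.span {x} • (⊤ : Submodule R M)) := by
  have hinj : Function.Injective (LinearMap.lsmul R M x) := by
    rw [← LinearMap.ker_eq_bot, LinearMap.ker_eq_bot']
    exact fun m hm => hx m hm
  have e (Q : Submodule R M) : Ideal.span {x} • Q = Q.map (LinearMap.lsmul R M x) :=
    Submodule.ideal_span_singleton_smul x Q
  have h1 := relLen_add (A := ⊤) (B := P) (C := Ideal.span {x} • P)
    Submodule.smul_le_right le_top
  have h2 := relLen_add (A := ⊤) (B := Ideal.span {x} • ⊤) (C := Ideal.span {x} • P)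
    (Submodule.smul_mono le_rfl le_top) le_top
  have h3 : relLen (Ideal.span {x} • (⊤ : Submodule R M)) (Ideal.span {x} • P) = relLen ⊤ P := by
    rw [e, e, relLen_map _ hinj]
  rw [h1, h3, add_comm] at h2
  exact WithTop.add_left_cancel hP h2

/-- Submodules containing `J M`, for `J` primary to the maximal ideal, have finite colength: `M / J M`
is finite over the Artinian ring `R / J`. -/
lemma relLen_top_ne_top {R M : Type*} [CommRing R] [IsLocalRing R] [IsNoetherianRing R]
    [AddCommGroup M] [Module R M] [Module.Finite R M] {J : Ideal R}
    (hJ : J.radical = maximalIdeal R) {Q : Submodule R M} (hQ : J • ⊤ ≤ Q) :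
    relLen ⊤ Q ≠ ⊤ := by
  have : IsArtinianRing (R ⧸ J) := by
    apply IsLocalRing.quotient_artinian_of_mem_minimalPrimes_of_isLocalRing
    rw [← Ideal.radical_minimalPrimes, hJ, Ideal.minimalPrimes_eq_subsingleton_self]
    rfl
  have : Module.Finite (R ⧸ J) (M ⧸ J • (⊤ : Submodule R M)) :=
    Module.Finite.of_restrictScalars_finite R _ _
  have : IsArtinian R (M ⧸ J • (⊤ : Submodule R M)) :=
    (isArtinian_of_surjective_algebraMap (R := R ⧸ J) Ideal.Quotient.mk_surjective)
  have : IsArtinian R (M ⧸ Q) := isArtinian_of_surjective _ (Submodule.factor hQ)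
    (Submodule.factor_surjective hQ)
  rw [relLen_top]
  exact Module.length_ne_top

/-! ### Relations between monomials of large degree -/

/-- The bounded growth of `I ^ N / 𝔪 I ^ N` forces a relation: for `x, y ∈ I` some binary form in
`x, y` with a unit coefficient lies in `𝔪 I ^ N`, where `N` is its degree. With `N = ℓ(R / aR)` the
`N + 1` monomials of degree `N` cannot be independent, as `ℓ(I ^ N / a I ^ N) = N`. -/
lemma exists_form_mem {R : Type*} [CommRing R] [IsLocalRing R] [IsNoetherianRing R]
    {I : Ideal R} (hI : I.radical = maximalIdeal R) {a : R} (haI : a ∈ maximalIdeal R)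
    (ha : a ∈ nonZeroDivisors R)
    (hfin : relLen ⊤ (Ideal.span {a} • (⊤ : Ideal R)) ≠ ⊤) {x y : R} (hx : x ∈ I) (hy : y ∈ I) :
    ∃ (N : ℕ) (c : ℕ → R), (∃ i ∈ Finset.range (N + 1), c i ∉ maximalIdeal R) ∧
      ∑ i ∈ Finset.range (N + 1), c i * (x ^ i * y ^ (N - i)) ∈ maximalIdeal R * I ^ N := by
  obtain ⟨N, hN⟩ := ENat.ne_top_iff_exists.1 hfin
  refine ⟨N, ?_⟩
  by_contra! hcon
  set v : ℕ → R := fun i => x ^ i * y ^ (N - i) with hv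
  set P : ℕ → Ideal R := fun j =>
    maximalIdeal R * I ^ N ⊔ Submodule.span R (v '' (Finset.range j : Set ℕ)) with hP
  have hPmono (j : ℕ) : P j ≤ P (j + 1) := by
    refine sup_le_sup_left (Submodule.span_mono (Set.image_mono ?_)) _
    exact_mod_cast Finset.range_mono (Nat.le_succ j)
  have hvP (j : ℕ) (hj : j ≤ N) : v j ∉ P j := by
    intro h
    obtain ⟨z, hz, w, hw, hzw⟩ := Submodule.mem_sup.1 h
    obtain ⟨c₀, hc₀⟩ := (Submodule.mem_span_image_finset_iff_exists_fun R).1 hw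
    obtain ⟨c, rfl⟩ : ∃ c : ℕ → R, ∑ i ∈ Finset.range j, c i • v i = w := by
      refine ⟨fun i => if h : i ∈ Finset.range j then c₀ ⟨i, h⟩ else 0, ?_⟩
      rw [← hc₀, ← Finset.sum_coe_sort]
      refine Finset.sum_congr rfl fun i _ => ?_
      simp only [dif_pos i.2]
    -- the coefficients of `v j - ∑ i < j, c i * v i`
    let d : ℕ → R := fun i => if i < j then - c i else if i = j then 1 else 0
    refine hcon d ⟨j, by simpa using Nat.lt_succ_of_le hj, ?_⟩ ?_
    · simp [d]
    · have hsub : Finset.range (j + 1) ⊆ Finset.range (N + 1) :=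
        Finset.range_mono (Nat.succ_le_succ hj)
      rw [← Finset.sum_subset hsub, Finset.sum_range_succ]
      · have : ∑ i ∈ Finset.range j, d i * (x ^ i * y ^ (N - i)) =
            - ∑ i ∈ Finset.range j, c i • v i := by
          rw [← Finset.sum_neg_distrib]
          refine Finset.sum_congr rfl fun i hi => ?_
          simp [d, Finset.mem_range.1 hi, hv]
        rw [this]
        have hd : d j * (x ^ j * y ^ (N - j)) = v j := by simp [d, hv]
        rw [hd, ← hzw]
        simpa using hz
      · intro i _ hi
        have : ¬ i < j + 1 := by simpa using hi
        have h1 : ¬ i < j := by omega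
        have h2 : ¬ i = j := by omega
        simp [d, h1, h2]
  have hlen (j : ℕ) (hj : j ≤ N + 1) : (j : ℕ∞) ≤ relLen (P j) (maximalIdeal R * I ^ N) := by
    induction j with
    | zero => simp
    | succ j ih =>
      rw [relLen_add le_sup_left (hPmono j)]
      push_cast
      refine add_le_add (ih (by omega)) ?_
      rw [Order.one_le_iff_ne_zero, Ne, relLen_eq_zero]
      intro hle
      refine hvP j (by omega) (hle ?_)
      exact Submodule.mem_sup_right (Submodule.subset_span ⟨j, by simp, rfl⟩)
  have hPI : P (N + 1) ≤ I ^ N := by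
    refine sup_le Ideal.mul_le_right (Submodule.span_le.2 ?_)
    rintro _ ⟨i, hi, rfl⟩
    have hi' : i ≤ N := by
      have : i < N + 1 := by simpa using hi
      omega
    have := Ideal.mul_mem_mul (Ideal.pow_mem_pow hx i) (Ideal.pow_mem_pow hy (N - i))
    rwa [← pow_add, Nat.add_sub_cancel' hi'] at this
  have hle : Ideal.span {a} • I ^ N ≤ maximalIdeal R * I ^ N :=
    Ideal.mul_mono_left ((Ideal.span_singleton_le_iff_mem _).2 haI)
  have hcol : relLen ⊤ (I ^ N) ≠ ⊤ := by
    rcases Nat.eq_zero_or_pos N with h0 | h0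
    · rw [h0, pow_zero, Ideal.one_eq_top, relLen_eq_zero.2 le_rfl]
      exact ENat.zero_ne_top
    · refine relLen_top_ne_top (J := I ^ N) ?_ (by simp)
      rw [Ideal.radical_pow _ h0.ne', hI]
  have h1 := relLen_smul (fun m hm => (mem_nonZeroDivisors_iff_right.1 ha) m (by
    rwa [smul_eq_mul, mul_comm] at hm)) (I ^ N) hcol
  rw [← hN, relLen_add hle Ideal.mul_le_right, relLen_add le_sup_left hPI] at h1
  have h2 := hlen (N + 1) le_rfl
  have h3 : ((N + 1 : ℕ) : ℕ∞) ≤ N := by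
    rw [← h1]
    exact h2.trans (le_self_add.trans le_add_self)
  have h4 : N + 1 ≤ N := by exact_mod_cast h3
  omega

/-! ### The Rees algebra modulo `(𝔪, xT)` -/

/-- The degree `n` component of the homogeneous ideal `(𝔪, xT)` of the Rees algebra of `I`. -/
def fiberPart {R : Type*} [CommRing R] [IsLocalRing R] (I : Ideal R) (x : R) : ℕ → Ideal R
  | 0 => maximalIdeal R
  | n + 1 => Ideal.span {x} * I ^ n ⊔ maximalIdeal R * I ^ (n + 1)

lemma pow_mul_fiberPart_le {R : Type*} [CommRing R] [IsLocalRing R] (I : Ideal R) (x : R)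
    (i j : ℕ) : I ^ i * fiberPart I x j ≤ fiberPart I x (i + j) := by
  cases j with
  | zero =>
    cases i with
    | zero => simp
    | succ i =>
      rw [mul_comm]
      exact le_sup_right
  | succ j =>
    change _ ≤ Ideal.span {x} * I ^ (i + j) ⊔ maximalIdeal R * I ^ (i + j + 1)
    rw [fiberPart, Ideal.mul_sup, add_assoc, pow_add I i j, pow_add I i (j + 1),
      mul_left_comm, mul_left_comm (I ^ i)]

/-- The ideal of the Rees algebra with homogeneous components `fiberPart I x`. -/
def fiberCoeffIdeal {R : Type*} [CommRing R] [IsLocalRing R] (I : Ideal R) (x : R) :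
    Ideal (reesAlgebra I) where
  carrier := {f | ∀ n, (f : Polynomial R).coeff n ∈ fiberPart I x n}
  add_mem' := by
    intro f g hf hg n
    simpa using add_mem (hf n) (hg n)
  zero_mem' := by
    intro n
    simp
  smul_mem' := by
    intro f g hg n
    change ((f : Polynomial R) * (g : Polynomial R)).coeff n ∈ _
    rw [Polynomial.coeff_mul]
    refine sum_mem fun p hp => ?_
    rw [← Finset.HasAntidiagonal.mem_antidiagonal.1 hp]
    exact pow_mul_fiberPart_le I x _ _ (Ideal.mul_mem_mul (f.2 _) (hg _))

/-- The element `r Tⁿ` of the Rees algebra, for `r ∈ Iⁿ`. -/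
noncomputable def reesMonomial {R : Type*} [CommRing R] {I : Ideal R} (n : ℕ) (r : R) (hr : r ∈ I ^ n) :
    reesAlgebra I :=
  ⟨Polynomial.monomial n r, reesAlgebra.monomial_mem.2 hr⟩

/-- The element `g T` of the Rees algebra, for `g ∈ I`. -/
noncomputable def reesLin {R : Type*} [CommRing R] {I : Ideal R} (g : I) : reesAlgebra I :=
  reesMonomial 1 (g : R) (by simp)

/-- The ideal `(𝔪, xT)` of the Rees algebra `R[IT]`; the quotient is the fiber ring of `I` modulo
the class of `x` in degree one. -/
noncomputable def fiberIdeal {R : Type*} [CommRing R] [IsLocalRing R] {I : Ideal R} (x : I) :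
    Ideal (reesAlgebra I) :=
  (maximalIdeal R).map (algebraMap R (reesAlgebra I)) ⊔ Ideal.span {reesLin x}

lemma fiberIdeal_le {R : Type*} [CommRing R] [IsLocalRing R] {I : Ideal R} (x : I) :
    fiberIdeal x ≤ fiberCoeffIdeal I (x : R) := by
  have hmono {n : ℕ} {r : R} (hr : r ∈ fiberPart I x n) (f : reesAlgebra I)
      (hf : (f : Polynomial R) = Polynomial.monomial n r) : f ∈ fiberCoeffIdeal I (x : R) := by
    intro k
    rw [hf, Polynomial.coeff_monomial]
    split_ifs with hk
    · exact hk ▸ hr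
    · exact zero_mem _
  refine sup_le (Ideal.map_le_iff_le_comap.2 fun r hr => ?_)
    ((Ideal.span_singleton_le_iff_mem _).2 ?_)
  · exact hmono (n := 0) hr _ rfl
  · exact hmono (n := 1) (r := (x : R)) (Submodule.mem_sup_left (by simp)) _ rfl

lemma reesMonomial_mem_fiberIdeal {R : Type*} [CommRing R] [IsLocalRing R] {I : Ideal R} (x : I)
    {n : ℕ} {r : R} (h : r ∈ I ^ n) (hr : r ∈ maximalIdeal R * I ^ n) :
    reesMonomial n r h ∈ fiberIdeal x := by
  suffices H : ∃ h : r ∈ I ^ n, reesMonomial n r h ∈ fiberIdeal x from H.2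
  induction hr using Submodule.mul_induction_on' with
  | mem_mul_mem a ha b hb =>
    refine ⟨Ideal.mul_mem_left _ _ hb, ?_⟩
    have e : reesMonomial n (a * b) (Ideal.mul_mem_left _ _ hb) =
        reesMonomial n b hb * algebraMap R (reesAlgebra I) a := by
      apply Subtype.ext
      change Polynomial.monomial n (a * b) = Polynomial.monomial n b * Polynomial.C a
      rw [Polynomial.monomial_mul_C, mul_comm]
    rw [e]
    refine Ideal.mul_mem_left _ _ ?_
    have h1 := Ideal.mem_map_of_mem (algebraMap R (reesAlgebra I)) ha
    exact (le_sup_left (a := (maximalIdeal R).map (algebraMap R (reesAlgebra I)))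
      (b := Ideal.span {reesLin x})) h1
  | add a _ b _ iha ihb =>
    obtain ⟨ha, ha'⟩ := iha (Ideal.mul_le_right ‹_›)
    obtain ⟨hb, hb'⟩ := ihb (Ideal.mul_le_right ‹_›)
    refine ⟨add_mem ha hb, ?_⟩
    have e : reesMonomial n (a + b) (add_mem ha hb) = reesMonomial n a ha + reesMonomial n b hb :=
      Subtype.ext (map_add (Polynomial.monomial n) a b)
    rw [e]
    exact add_mem ha' hb'

lemma reesLin_add {R : Type*} [CommRing R] {I : Ideal R} (g h : I) :
    reesLin (g + h) = reesLin g + reesLin h :=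
  Subtype.ext (map_add (Polynomial.monomial 1) (g : R) (h : R))

lemma reesLin_smul {R : Type*} [CommRing R] {I : Ideal R} (r : R) (g : I) :
    reesLin (r • g) = r • reesLin g :=
  Subtype.ext (map_smul (Polynomial.monomial 1) r (g : R))

/-- In an `R`-algebra, a binary form in `X, Y` lying in `J` and taking a unit value at `(t, 1)` makes
`X` and `Y` nilpotent modulo `J`, provided that `X ≡ t Y` modulo `J`. -/
lemma mem_radical_of_form {R S : Type*} [CommRing R] [CommRing S] [Algebra R S] {J : Ideal S}
    {X Y : S} {t : R} {N : ℕ} {c : ℕ → R} (hXY : X - t • Y ∈ J)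
    (ht : IsUnit (∑ i ∈ Finset.range (N + 1), c i * t ^ i))
    (hform : ∑ i ∈ Finset.range (N + 1), algebraMap R S (c i) * (X ^ i * Y ^ (N - i)) ∈ J) :
    X ∈ J.radical ∧ Y ∈ J.radical := by
  have hmk : Ideal.Quotient.mk J X = algebraMap R _ t * Ideal.Quotient.mk J Y := by
    rw [Ideal.Quotient.eq.2 hXY, Algebra.smul_def, map_mul]
    rfl
  have hy : Y ^ N ∈ J := by
    rw [← Ideal.Quotient.eq_zero_iff_mem] at hform ⊢
    simp only [map_sum, map_mul, map_pow, hmk] at hform ⊢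
    have h : algebraMap R (S ⧸ J) (∑ i ∈ Finset.range (N + 1), c i * t ^ i) *
        Ideal.Quotient.mk J Y ^ N = 0 := by
      rw [← hform, map_sum, Finset.sum_mul]
      refine Finset.sum_congr rfl fun i hi => ?_
      have hi' : i ≤ N := Nat.lt_succ_iff.1 (Finset.mem_range.1 hi)
      have e : Ideal.Quotient.mk J (algebraMap R S (c i)) = algebraMap R (S ⧸ J) (c i) := rfl
      nth_rewrite 1 [← Nat.add_sub_cancel' hi']
      rw [e, map_mul, map_pow, pow_add, mul_pow]
      ring
    exact ((ht.map (algebraMap R (S ⧸ J))).mul_right_eq_zero).1 h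
  have hy' : Y ∈ J.radical := ⟨N, hy⟩
  refine ⟨?_, hy'⟩
  have := J.radical.add_mem (Ideal.le_radical hXY)
    (J.radical.mul_mem_left (algebraMap R S t) hy')
  rwa [Algebra.smul_def, sub_add_cancel] at this

/-- One step towards a parameter: if a form of degree `N` in `x, y` with a unit coefficient lies in
`𝔪 I ^ N`, choose `t` so that the form takes a unit value at `(t, 1)`. Modulo `x - t y` the form
becomes a unit multiple of `y ^ N`, so `x` and `y` are nilpotent in the fiber ring of `I` modulo
`x - t y`. -/
lemma exists_reesLin_mem_radical {R : Type*} [CommRing R] [IsLocalRing R]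
    [Infinite (ResidueField R)] {I : Ideal R} (x y : I) {N : ℕ} {c : ℕ → R}
    (hc : ∃ i ∈ Finset.range (N + 1), c i ∉ maximalIdeal R)
    (hmem : ∑ i ∈ Finset.range (N + 1), c i * ((x : R) ^ i * (y : R) ^ (N - i)) ∈
      maximalIdeal R * I ^ N) :
    ∃ z : I, reesLin x ∈ (fiberIdeal z).radical ∧
      reesLin y ∈ (fiberIdeal z).radical := by
  obtain ⟨t, ht⟩ : ∃ t : R,
      IsUnit (∑ i ∈ Finset.range (N + 1), c i * t ^ i) := by
    let p : Polynomial (ResidueField R) :=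
      ∑ i ∈ Finset.range (N + 1), Polynomial.monomial i (residue R (c i))
    have hp : p ≠ 0 := by
      obtain ⟨i, hi, hci⟩ := hc
      intro h0
      have h1 : p.coeff i = residue R (c i) := by
        simp only [p, Polynomial.finsetSum_coeff, Polynomial.coeff_monomial]
        rw [Finset.sum_ite_eq' , if_pos hi]
      rw [h0, Polynomial.coeff_zero] at h1
      exact hci ((residue_eq_zero_iff _).1 h1.symm)
    obtain ⟨s, hs⟩ : ∃ s, p.eval s ≠ 0 := by
      by_contra! h
      exact hp (Polynomial.funext fun s => by simpa using h s)
    obtain ⟨t, rfl⟩ := residue_surjective s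
    refine ⟨t, ?_⟩
    rw [← residue_ne_zero_iff_isUnit]
    simpa [p, Polynomial.eval_finsetSum] using hs
  refine ⟨x - t • y, ?_⟩
  refine mem_radical_of_form (t := t) (N := N) (c := c) ?_ ht ?_
  · have e : reesLin x - t • reesLin y = reesLin (x - t • y) := by
      rw [← reesLin_smul, sub_eq_iff_eq_add, ← reesLin_add, sub_add_cancel]
    rw [e]
    exact Submodule.mem_sup_right (Ideal.mem_span_singleton_self _)
  · have hsum : (∑ i ∈ Finset.range (N + 1),
        algebraMap R (reesAlgebra I) (c i) * (reesLin x ^ i * reesLin y ^ (N - i))) =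
        reesMonomial N _ (Ideal.mul_le_right hmem) := by
      apply Subtype.ext
      simp only [reesMonomial, reesLin, AddSubmonoidClass.coe_finsetSum, MulMemClass.coe_mul,
        SubmonoidClass.coe_pow, Polynomial.monomial_pow, map_sum]
      refine Finset.sum_congr rfl fun i hi => ?_
      have hi' : i ≤ N := Nat.lt_succ_iff.1 (Finset.mem_range.1 hi)
      rw [Polynomial.monomial_mul_monomial, one_mul, one_mul, Nat.add_sub_cancel' hi']
      change Polynomial.C (c i) * _ = _
      rw [Polynomial.C_mul_monomial]
    rw [hsum]
    exact reesMonomial_mem_fiberIdeal _ _ hmem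

/-! ### Existence of a principal reduction -/

/-- A single `x ∈ I` makes every element of a finite subset of `I` nilpotent in the fiber ring
modulo `x`: the elements are absorbed one at a time by `exists_reesLin_mem_radical`. -/
lemma exists_forall_mem_radical {R : Type*} [CommRing R] [IsLocalRing R] [IsNoetherianRing R]
    [Infinite (ResidueField R)]
    {I : Ideal R} (hI : I.radical = maximalIdeal R) {a : R} (haI : a ∈ maximalIdeal R)
    (ha : a ∈ nonZeroDivisors R)
    (hfin : relLen ⊤ (Ideal.span {a} • (⊤ : Ideal R)) ≠ ⊤) (s : Finset I) :
    ∃ z : I, ∀ g ∈ s, reesLin g ∈ (fiberIdeal z).radical := by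
  classical
  induction s using Finset.induction_on with
  | empty => exact ⟨0, by simp⟩
  | insert y s _ ih =>
    obtain ⟨x, hx⟩ := ih
    obtain ⟨N, c, hc, hmem⟩ := exists_form_mem hI haI ha hfin x.2 y.2
    obtain ⟨z, hxz, hyz⟩ := exists_reesLin_mem_radical x y hc hmem
    have hle : (fiberIdeal x).radical ≤ (fiberIdeal z).radical := by
      rw [Ideal.radical_le_radical_iff]
      exact sup_le (le_sup_left.trans Ideal.le_radical)
        ((Ideal.span_singleton_le_iff_mem _).2 hxz)
    refine ⟨z, fun g hg => ?_⟩
    rcases Finset.mem_insert.1 hg with rfl | hg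
    · exact hyz
    · exact hle (hx g hg)

/-- Existence of a principal reduction, in the one-dimensional Cohen-Macaulay case over an infinite
residue field. -/
lemma exists_isMinimalReduction {R : Type*} [CommRing R] [IsLocalRing R] [IsNoetherianRing R]
    [Infinite (ResidueField R)]
    {I : Ideal R} (hI : I.radical = maximalIdeal R) {a : R} (haI : a ∈ maximalIdeal R)
    (ha : a ∈ nonZeroDivisors R)
    (hfin : relLen ⊤ (Ideal.span {a} • (⊤ : Ideal R)) ≠ ⊤) :
    ∃ x, IsMinimalReduction R I x := by
  obtain ⟨s, hs⟩ : (⊤ : Submodule R I).FG := Module.Finite.fg_top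
  obtain ⟨z, hz⟩ := exists_forall_mem_radical hI haI ha hfin s
  refine ⟨z, z.2, ?_⟩
  set K : Ideal (reesAlgebra I) := Ideal.span (Set.range (reesLin (I := I))) with hK
  have hKrad : K ≤ (fiberIdeal z).radical := by
    refine Ideal.span_le.2 ?_
    rintro _ ⟨g, rfl⟩
    have hg : g ∈ Submodule.span R (s : Set I) := hs ▸ Submodule.mem_top
    induction hg using Submodule.span_induction with
    | mem g hg => exact hz g hg
    | zero =>
      have : reesLin (0 : I) = 0 := Subtype.ext (map_zero (Polynomial.monomial 1))
      rw [this]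
      exact zero_mem _
    | add g h _ _ hg hh =>
      rw [reesLin_add]
      exact add_mem hg hh
    | smul r g _ hg =>
      rw [reesLin_smul, Algebra.smul_def]
      exact Ideal.mul_mem_left _ _ hg
  have hpow (n : ℕ) (r : R) (hr : r ∈ I ^ n) : ∃ h, reesMonomial n r h ∈ K ^ n := by
    induction n generalizing r with
    | zero => exact ⟨hr, by simp⟩
    | succ n ih =>
      rw [pow_succ] at hr
      induction hr using Submodule.mul_induction_on' with
      | mem_mul_mem a ha b hb =>
        obtain ⟨ha', ha''⟩ := ih a ha
        have hab : a * b ∈ I ^ (n + 1) := pow_succ I n ▸ Ideal.mul_mem_mul ha hb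
        refine ⟨hab, ?_⟩
        have e : reesMonomial (n + 1) (a * b) hab =
            reesMonomial n a ha' * reesLin (⟨b, hb⟩ : I) :=
          Subtype.ext (Polynomial.monomial_mul_monomial n 1 a b).symm
        rw [e, pow_succ]
        exact Ideal.mul_mem_mul ha'' (Ideal.subset_span ⟨_, rfl⟩)
      | add a _ b _ iha ihb =>
        obtain ⟨ha, ha'⟩ := iha
        obtain ⟨hb, hb'⟩ := ihb
        refine ⟨add_mem ha hb, ?_⟩
        have e : reesMonomial (n + 1) (a + b) (add_mem ha hb) =
            reesMonomial (n + 1) a ha + reesMonomial (n + 1) b hb :=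
          Subtype.ext (map_add (Polynomial.monomial (n + 1)) a b)
        rw [e]
        exact add_mem ha' hb'
  obtain ⟨n, hn⟩ := Ideal.exists_pow_le_of_le_radical_of_fg hKrad (IsNoetherian.noetherian K)
  have hle : I ^ (n + 1) ≤ Ideal.span {(z : R)} * I ^ n ⊔ maximalIdeal R • I ^ (n + 1) := by
    intro r hr
    obtain ⟨h, hr'⟩ := hpow (n + 1) r hr
    have h1 := fiberIdeal_le z (hn (Ideal.pow_le_pow_right n.le_succ hr')) (n + 1)
    have h2 : (Polynomial.monomial (n + 1) r).coeff (n + 1) ∈ fiberPart I (z : R) (n + 1) := h1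
    rwa [Polynomial.coeff_monomial_same] at h2
  have hle' : I ^ (n + 1) ≤ Ideal.span {(z : R)} * I ^ n :=
    Submodule.le_of_le_smul_of_le_jacobson_bot (IsNoetherian.noetherian _)
      (IsLocalRing.maximalIdeal_le_jacobson _) hle
  have hz' : Ideal.span {(z : R)} ≤ I := (Ideal.span_singleton_le_iff_mem _).2 z.2
  have heq : I ^ (n + 1) = Ideal.span {(z : R)} * I ^ n := by
    refine le_antisymm hle' ?_
    rw [pow_succ']
    exact Ideal.mul_mono_left hz'
  refine ⟨n, fun k hk => ?_⟩
  obtain ⟨j, rfl⟩ := Nat.exists_eq_add_of_le hk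
  rw [show n + j + 1 = (n + 1) + j by ring, pow_add, heq, pow_add, mul_assoc]

/-! ### Multiplicity via a principal reduction -/

/-- A principal reduction `(x)` of an ideal containing a power of the nonzerodivisor `r` is generated
by a nonzerodivisor, since a power of `r` lies in `(x)`. -/
lemma IsMinimalReduction.mem_nonZeroDivisors {R : Type*} [CommRing R] {I : Ideal R} {x r : R}
    (hx : IsMinimalReduction R I x) (hr : r ∈ nonZeroDivisors R) (hrI : r ∈ I.radical) :
    x ∈ nonZeroDivisors R := by
  obtain ⟨k, hk⟩ := hrI
  obtain ⟨-, N, hN⟩ := hx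
  have h1 : (r ^ k) ^ (N + 1) ∈ I ^ (N + 1) := Ideal.pow_mem_pow hk _
  rw [hN N le_rfl] at h1
  obtain ⟨b, hb⟩ := Ideal.mem_span_singleton'.1 (Ideal.mul_le_left h1)
  have h2 : b * x ∈ nonZeroDivisors R := hb ▸ pow_mem (pow_mem hr _) _
  exact (mul_mem_nonZeroDivisors.1 h2).2

/-- A principal reduction computes the multiplicity: `e(I, M) = ℓ(M / xM)`. -/
lemma hsMult_eq {R : Type*} [CommRing R] [IsLocalRing R] [IsNoetherianRing R]
    {I : Ideal R} (hI : I.radical = maximalIdeal R)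
    {M : Type*} [AddCommGroup M] [Module R M] [Module.Finite R M] {x : R}
    (hx : IsMinimalReduction R I x) (hxM : ∀ m : M, x • m = 0 → m = 0) :
    hsMult R I M = relLen ⊤ (Ideal.span {x} • (⊤ : Submodule R M)) := by
  classical
  obtain ⟨hxI, N, hN⟩ := hx
  have hfin (n : ℕ) (hn : n ≠ 0) : relLen ⊤ (I ^ n • (⊤ : Submodule R M)) ≠ ⊤ :=
    relLen_top_ne_top (J := I ^ n) (by rw [Ideal.radical_pow _ hn, hI]) le_rfl
  have key (n : ℕ) (hn : N + 1 ≤ n) : relLen ⊤ (I ^ (n + 1) • (⊤ : Submodule R M)) =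
      relLen ⊤ (I ^ n • (⊤ : Submodule R M)) +
        relLen ⊤ (Ideal.span {x} • (⊤ : Submodule R M)) := by
    rw [relLen_add (B := I ^ n • (⊤ : Submodule R M))
      (Submodule.smul_mono_left (Ideal.pow_le_pow_right n.le_succ)) le_top, hN n (by omega),
      ← smul_eq_mul, Submodule.smul_assoc, relLen_smul hxM _ (hfin n (by omega)), add_comm]
  have hex : ∃ e : ℕ∞, ∀ᶠ n in atTop,
      mlen R (M ⧸ (I ^ (n + 1) • (⊤ : Submodule R M))) =
        mlen R (M ⧸ (I ^ n • (⊤ : Submodule R M))) + (e : WithBot ℕ∞) := by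
    refine ⟨relLen ⊤ (Ideal.span {x} • (⊤ : Submodule R M)), ?_⟩
    filter_upwards [eventually_ge_atTop (N + 1)] with n hn
    rw [mlen_quotient, mlen_quotient, key n hn, WithBot.coe_add]
  rw [hsMult, dif_pos hex]
  obtain ⟨n, hn, hn'⟩ := (hex.choose_spec.and (eventually_ge_atTop (N + 1))).exists
  rw [mlen_quotient, mlen_quotient, key n hn', ← WithBot.coe_add, WithBot.coe_inj] at hn
  exact (WithTop.add_left_cancel (hfin n (by omega)) hn).symm

/-- For a fixed principal reduction `(x)`, the equality `e(I, M) = ℓ(IM / I²M)` says exactly that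
`ℓ(I²M / xIM) = 0`, because `e(I, M) = ℓ(M / xM) = ℓ(IM / xIM)`. -/
lemma hsMult_eq_qlen_iff {R : Type*} [CommRing R] [IsLocalRing R] [IsNoetherianRing R]
    {I : Ideal R} (hI : I.radical = maximalIdeal R)
    {M : Type*} [AddCommGroup M] [Module R M] [Module.Finite R M] {x : R}
    (hx : IsMinimalReduction R I x) (hxM : ∀ m : M, x • m = 0 → m = 0) :
    ((hsMult R I M : ℕ∞) : WithBot ℕ∞) =
        qlen R (I • (⊤ : Submodule R M)) (I ^ 2 • (⊤ : Submodule R M)) ↔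
      I ^ 2 • (⊤ : Submodule R M) = Ideal.span {x} • (I • (⊤ : Submodule R M)) := by
  have hxI : Ideal.span {x} ≤ I := (Ideal.span_singleton_le_iff_mem _).2 hx.1
  have hsq : I ^ 2 • (⊤ : Submodule R M) = I • (I • (⊤ : Submodule R M)) := by
    rw [pow_two, ← smul_eq_mul, Submodule.smul_assoc]
  have hle : Ideal.span {x} • (I • (⊤ : Submodule R M)) ≤ I ^ 2 • (⊤ : Submodule R M) :=
    hsq ▸ Submodule.smul_mono_left hxI
  have hle' : I ^ 2 • (⊤ : Submodule R M) ≤ I • (⊤ : Submodule R M) :=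
    Submodule.smul_mono_left (Ideal.pow_le_self two_ne_zero)
  have hfin : relLen (I • (⊤ : Submodule R M)) (I ^ 2 • (⊤ : Submodule R M)) ≠ ⊤ := by
    have h := relLen_top_ne_top (M := M) (J := I ^ 2) (Q := I ^ 2 • ⊤)
      (by rw [Ideal.radical_pow _ two_ne_zero, hI]) le_rfl
    rw [relLen_add hle' le_top] at h
    exact fun h' => h (by rw [h', top_add])
  rw [qlen_eq_relLen, WithBot.coe_inj, hsMult_eq hI hx hxM,
    ← relLen_smul hxM (I • ⊤) (relLen_top_ne_top hI le_rfl), relLen_add hle hle']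
  constructor
  · intro h
    refine le_antisymm (relLen_eq_zero.1 (WithTop.add_right_cancel hfin ?_)) hle
    exact h.trans (zero_add _).symm
  · intro h
    rw [relLen_eq_zero.2 h.le, zero_add]

/-- `M` has minimal multiplicity with respect to `I`
(`e_R(I,M) = ℓ_R(IM/I²M)`) iff `I²M = xIM` for some minimal reduction `(x)` of `I`. -/
theorem stmt1 (R : Type*) [CommRing R] [IsLocalRing R] [IsNoetherianRing R]
    [Infinite (ResidueField R)]
    (hdim : ringKrullDim R = 1)
    (hCM : ∃ r ∈ maximalIdeal R, r ∈ nonZeroDivisors R)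
    (I : Ideal R) (hI : I.radical = maximalIdeal R)
    (M : Type*) [AddCommGroup M] [Module R M] [Module.Finite R M] [Nontrivial M]
    (hTF : TorsionFree R M) :
    ((hsMult R I M : ℕ∞) : WithBot ℕ∞) =
        qlen R (I • (⊤ : Submodule R M)) (I ^ 2 • (⊤ : Submodule R M)) ↔
      ∃ x : R, IsMinimalReduction R I x ∧
        I ^ 2 • (⊤ : Submodule R M) = Ideal.span {x} • (I • (⊤ : Submodule R M)) := by
  obtain ⟨r, hrm, hr⟩ := hCM
  have hinj {x : R} (hx : IsMinimalReduction R I x) : ∀ m : M, x • m = 0 → m = 0 :=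
    hTF x (hx.mem_nonZeroDivisors hr (hI ▸ hrm))
  have : Ring.KrullDimLE 1 R := (Order.krullDimLE_iff 1 _).2 hdim.le
  have hfin : relLen ⊤ (Ideal.span {r} • (⊤ : Ideal R)) ≠ ⊤ := by
    rw [smul_eq_mul, Ideal.mul_top, relLen_top, Module.length_ne_top_iff]
    exact isFiniteLength_quotient_span_singleton R hr
  constructor
  · intro h
    obtain ⟨x, hx⟩ := exists_isMinimalReduction hI hrm hr hfin
    exact ⟨x, hx, (hsMult_eq_qlen_iff hI hx (hinj hx)).1 h⟩
  · rintro ⟨x, hx, h⟩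
    exact (hsMult_eq_qlen_iff hI hx (hinj hx)).2 h
end

section
/- Let R be a one-dimensional Cohen-Macaulay local ring, M a finitely generated torsion-free R-module, and A = R ⋉ M. Then A has minimal multiplicity (as a ring) if and only if R has minimal multiplicity and M is an Ulrich R-module. -/
/-!
Write `A = R ⋉ M`, with maximal ideals `𝔪` of `R` and `𝔫` of `A`. The powers of `𝔫` are
`𝔫 ^ (k + 1) = 𝔪 ^ (k + 1) ⊕ 𝔪 ^ k M` (`mem_maximalIdeal_idealization_pow`), so
`ℓ(A / 𝔫 ^ (k + 1)) = ℓ(R / 𝔪 ^ (k + 1)) + ℓ(M / 𝔪 ^ k M)`. Hence `e(A) = e(R) + e(M)`, and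
comparing `k = 0` with `k = 1` gives `embdim A = embdim R + μ(M)` (`embdim_idealization`).
Together with the inequalities `embdim R ≤ e(R)` and `μ(M) ≤ e(M)`, equality for `A` amounts to
equality for both `R` and `M`.

The inequalities, and the fact that the multiplicities are the finite eventual increments of the
Hilbert–Samuel functions, come from a principal reduction `(x)` of `𝔪` with `x` regular: since
`𝔪 ^ (n + 1) = x 𝔪 ^ n` for large `n` and `x` acts injectively on `M`, the increment is
`e(M) = ℓ(M / x M)` (`length_quotient_pow_succ`), and this maps onto `M / 𝔪 M`. For
`embdim R ≤ ℓ(R / x R)`, compare `R / 𝔪 ^ 2` with `R / x 𝔪` (`embdim_le_length`).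

The existence of the reduction (`exists_reduction`) rests on a theorem of Eakin and Sathaye in its
principal case (`exists_pow_le_span_mul_sup`): over an infinite residue field, if
`ℓ(𝔪 ^ n / 𝔪 ^ (n + 1)) ≤ n` then `𝔪 ^ n = x 𝔪 ^ (n - 1)` for some `x`. The hypothesis holds for
large `n` because these lengths are bounded by `ℓ(R / r R)` for a regular `r ∈ 𝔪`.
-/

open IsLocalRing Filter

/-! ### A principal Eakin–Sathaye theorem -/

theorem mem_submoduleOf_iff {R M : Type*} [CommRing R] [AddCommGroup M] [Module R M]
    {p q : Submodule R M} {x : q} : x ∈ p.submoduleOf q ↔ (x : M) ∈ p := Iff.rfl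

/-- Linear independence of a finite family survives a generic nonzero perturbation in a given
direction. -/
theorem exists_smul_add_linearIndependent {k W ι : Type*} [Field k] [Infinite k]
    [AddCommGroup W] [Module k W] [Fintype ι] (b c : ι → W) (hb : LinearIndependent k b) :
    ∃ t : k, t ≠ 0 ∧ LinearIndependent k (b + t • c) := by
  classical
  have hker := LinearMap.ker_eq_bot.mpr hb.fintypeLinearCombination_injective
  -- a dependence of `b - s⁻¹ • c` is an eigenvector of `T` for `s`, where `T` is `c` followed by a
  -- left inverse of `b`; so it suffices that `s` avoids `0` and the finitely many eigenvalues of `T`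
  obtain ⟨g, hg⟩ := (Fintype.linearCombination k b).exists_leftInverse_of_injective hker
  set T : Module.End k (ι → k) := g ∘ₗ Fintype.linearCombination k c with hT
  have hfin := Module.End.finite_hasEigenvalue T
  obtain ⟨s, hs⟩ := (hfin.union (Set.finite_singleton (0 : k))).infinite_compl.nonempty
  simp only [Set.mem_compl_iff, Set.mem_union, Set.mem_singleton_iff, not_or] at hs
  obtain ⟨hs1, hs0⟩ := hs
  refine ⟨-s⁻¹, by simpa using hs0, ?_⟩
  rw [linearIndependent_iff_injective_fintypeLinearCombination, ← LinearMap.ker_eq_bot,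
    LinearMap.ker_eq_bot']
  intro v hv
  have h1 : Fintype.linearCombination k b v - s⁻¹ • Fintype.linearCombination k c v = 0 := by
    rw [← hv]
    simp [Fintype.linearCombination_apply, Finset.sum_add_distrib, Finset.smul_sum, smul_add,
      smul_comm s⁻¹, sub_eq_add_neg]
  have h2 : v - s⁻¹ • T v = 0 := by
    have := congrArg g h1
    rw [map_sub, map_smul, map_zero] at this
    rw [← this, hT]
    congr 1
    exact (LinearMap.congr_fun hg v).symm
  by_contra hv0
  apply hs1
  refine Module.End.hasEigenvalue_of_hasEigenvector (x := v)
    (Module.End.hasEigenvector_iff.mpr ⟨Module.End.mem_eigenspace_iff.mpr ?_, hv0⟩)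
  rw [sub_eq_zero] at h2
  conv_rhs => rw [h2]
  rw [smul_inv_smul₀ hs0]

/-- If `f` has an image of maximal length in the pencil `f + t g` of maps into a finite-dimensional
vector space over the residue field, then `g` sends the kernel of `f` into the image of `f`.
Otherwise `g u` together with a basis `f (v i)` of the image of `f` is independent, hence so is
the family `g u`, `f (v i) + t g (v i)` for some `t ≠ 0`, and it lies in the image of `f + t g`. -/
theorem mem_range_of_maximal_length {R U W : Type*} [CommRing R] [IsLocalRing R]
    [Infinite (ResidueField R)] [AddCommGroup U] [Module R U] [AddCommGroup W] [Module R W]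
    [Module (ResidueField R) W] [IsScalarTower R (ResidueField R) W]
    [Module.Finite (ResidueField R) W] (f g : U →ₗ[R] W)
    (hmax : ∀ t : R, Module.length R (LinearMap.range (f + t • g)) ≤
      Module.length R (LinearMap.range f))
    (u : U) (hu : f u = 0) : g u ∈ LinearMap.range f := by
  classical
  have hsurj : Function.Surjective (algebraMap R (ResidueField R)) := residue_surjective
  -- `R`-submodules of `W` are the same as subspaces over the residue field
  have key : ∀ N : Submodule R W, ∃ N' : Submodule (ResidueField R) W,
      (∀ w, w ∈ N' ↔ w ∈ N) ∧
      Module.length R N = Module.finrank (ResidueField R) N' := by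
    intro N
    have h : (Submodule.span (ResidueField R) (N : Set W)).restrictScalars R = N := by
      rw [Submodule.restrictScalars_span R _ hsurj, Submodule.span_eq]
    refine ⟨Submodule.span (ResidueField R) (N : Set W), fun w => ?_, ?_⟩
    · conv_rhs => rw [← h]
      rfl
    · conv_lhs => rw [← h]
      rw [← Module.length_eq_finrank, ← Module.length_eq_of_surjective (S := R) hsurj]
      rfl
  by_contra hgu
  obtain ⟨N, hN, hlen⟩ := key (LinearMap.range f)
  set B := Module.finBasis (ResidueField R) N with hB
  have hv : ∀ i, ∃ v, f v = (B i : W) := fun i => (hN _).mp (B i).2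
  choose v hv using hv
  let b : Option (Fin (Module.finrank (ResidueField R) N)) → W :=
    fun o => o.elim (g u) (fun i => (B i : W))
  let c : Option (Fin (Module.finrank (ResidueField R) N)) → W :=
    fun o => o.elim 0 (fun i => g (v i))
  have hb : LinearIndependent (ResidueField R) b := by
    rw [linearIndependent_option]
    refine ⟨B.linearIndependent.map' N.subtype (Submodule.ker_subtype N), fun hmem => hgu ?_⟩
    rw [← hN]
    refine (Submodule.span_le.mpr ?_) hmem
    rintro _ ⟨i, rfl⟩
    exact (B i).2
  obtain ⟨t, ht0, ht⟩ := exists_smul_add_linearIndependent b c hb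
  obtain ⟨s, rfl⟩ := hsurj t
  obtain ⟨N', hN', hlen'⟩ := key (LinearMap.range (f + s • g))
  have hmem : ∀ o, (b + algebraMap R (ResidueField R) s • c) o ∈ N' := by
    rintro (_ | i)
    · have h1 : algebraMap R (ResidueField R) s • g u ∈ N' := by
        rw [hN']
        exact ⟨u, by simp [hu, algebraMap_smul, -ResidueField.algebraMap_eq]⟩
      have h2 := N'.smul_mem (algebraMap R (ResidueField R) s)⁻¹ h1
      rw [inv_smul_smul₀ ht0] at h2
      simpa [b, c] using h2
    · rw [hN']
      exact ⟨v i, by simp [b, c, hv, algebraMap_smul, -ResidueField.algebraMap_eq]⟩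
  have hli : LinearIndependent (ResidueField R)
      (fun o => (⟨_, hmem o⟩ : N')) := by
    refine LinearIndependent.of_comp N'.subtype ?_
    exact ht
  have hcard := hli.fintype_card_le_finrank
  have := hmax s
  rw [hlen, hlen'] at this
  have := Nat.cast_le.mp this
  simp only [Fintype.card_option, Fintype.card_fin] at hcard
  omega

/-- An element `x` of `𝔪` with `𝔪 ^ n = x 𝔪 ^ (n - 1)` modulo `L`, provided that the image of
`𝔪 ^ n` modulo `L` has length at most `n`. Take `x` for which multiplication
`𝔪 ^ (n - 1) → 𝔪 ^ n ⧸ L` has the longest image. If it is not surjective, the induction hypothesis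
for `K = (L : x)` gives some `z`, and `z` works for `L` too, because by maximality of the image
`𝔪 (K ∩ 𝔪 ^ (n - 1)) ⊆ x 𝔪 ^ (n - 1) + L`.

For `n = 0`, where `n - 1` is truncated, the hypothesis already forces `L = R`. -/
theorem exists_pow_le_span_mul_sup {R : Type*} [CommRing R] [IsLocalRing R]
    [Infinite (ResidueField R)] (n : ℕ) : ∀ (L : Ideal R),
    maximalIdeal R ^ (n + 1) ≤ L →
    Module.length R (↥(maximalIdeal R ^ n) ⧸ Submodule.submoduleOf L (maximalIdeal R ^ n)) ≤ n →
    ∃ x ∈ maximalIdeal R,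
      maximalIdeal R ^ n ≤ Ideal.span {x} * maximalIdeal R ^ (n - 1) ⊔ L := by
  classical
  induction n with
  | zero =>
    intro L _ hlen
    refine ⟨0, zero_mem _, ?_⟩
    have h0 : Module.length R (↥(maximalIdeal R ^ 0) ⧸
        Submodule.submoduleOf L (maximalIdeal R ^ 0)) = 0 := by simpa using hlen
    rw [Module.length_eq_zero_iff, Submodule.Quotient.subsingleton_iff,
      Submodule.submoduleOf_eq_top] at h0
    exact h0.trans le_sup_right
  | succ p ih =>
    intro L hL hlen
    set m := maximalIdeal R with hm
    -- multiplication by `x ∈ m`, as a map from `m ^ p` to `m ^ (p + 1) / L`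
    have hmul : ∀ x ∈ m, ∀ u ∈ m ^ p, x * u ∈ m ^ (p + 1) := fun x hx u hu => by
      rw [pow_succ']; exact Ideal.mul_mem_mul hx hu
    let φ : m → (↥(m ^ p) →ₗ[R] ↥(m ^ (p + 1)) ⧸ Submodule.submoduleOf L (m ^ (p + 1))) :=
      fun x => (Submodule.mkQ _) ∘ₗ
        LinearMap.restrict (LinearMap.lsmul R R (x : R)) (fun u hu => hmul x x.2 u hu)
    have hφ : ∀ x u, φ x u = Submodule.Quotient.mk ⟨(x : R) * u, hmul x x.2 u u.2⟩ :=
      fun _ _ => rfl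
    have hφ0 : ∀ x u, φ x u = 0 ↔ (x : R) * u ∈ L := fun x u => by
      rw [hφ, Submodule.Quotient.mk_eq_zero, mem_submoduleOf_iff]
    have hlenW : Module.length R (↥(m ^ (p + 1)) ⧸ Submodule.submoduleOf L (m ^ (p + 1))) ≠ ⊤ :=
      ne_top_of_le_ne_top (ENat.natCast_ne_top _) hlen
    obtain ⟨hWn, hWa⟩ :=
      isFiniteLength_iff_isNoetherian_isArtinian.mp (Module.length_ne_top_iff.mp hlenW)
    have htor : Module.IsTorsionBySet R
        (↥(m ^ (p + 1)) ⧸ Submodule.submoduleOf L (m ^ (p + 1))) m := by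
      rintro w ⟨a, ha⟩
      obtain ⟨w, rfl⟩ := Submodule.Quotient.mk_surjective _ w
      rw [← Submodule.Quotient.mk_smul, Submodule.Quotient.mk_eq_zero, mem_submoduleOf_iff]
      refine hL ?_
      rw [pow_succ']
      exact Ideal.mul_mem_mul ha w.2
    let : Module (ResidueField R)
      (↥(m ^ (p + 1)) ⧸ Submodule.submoduleOf L (m ^ (p + 1))) := htor.module
    have : IsScalarTower R (ResidueField R)
      (↥(m ^ (p + 1)) ⧸ Submodule.submoduleOf L (m ^ (p + 1))) := htor.isScalarTower
    have : Module.Finite (ResidueField R)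
      (↥(m ^ (p + 1)) ⧸ Submodule.submoduleOf L (m ^ (p + 1))) :=
      Module.Finite.of_restrictScalars_finite R _ _
    -- an element of `m` for which the image of multiplication is as long as possible
    obtain ⟨x, hx⟩ : ∃ x : m, ∀ y : m, Module.length R (LinearMap.range (φ y)) ≤
        Module.length R (LinearMap.range (φ x)) := by
      have hle : ∀ y : m, Module.length R (LinearMap.range (φ y)) ≤ (p + 1 : ℕ) := fun y =>
        (Module.length_le_of_injective _ (Submodule.subtype_injective _)).trans hlen
      have hne : ∀ y : m, Module.length R (LinearMap.range (φ y)) ≠ ⊤ := fun y =>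
        ne_top_of_le_ne_top (ENat.natCast_ne_top _) (hle y)
      have hbdd : BddAbove (Set.range fun y : m =>
          (Module.length R (LinearMap.range (φ y))).toNat) := by
        refine ⟨p + 1, ?_⟩
        rintro _ ⟨y, rfl⟩
        exact ENat.toNat_le_of_le_natCast (hle y)
      obtain ⟨x, hx⟩ := Nat.sSup_mem (Set.range_nonempty _) hbdd
      refine ⟨x, fun y => ?_⟩
      rw [← ENat.natCast_toNat (hne y), ← ENat.natCast_toNat (hne x), Nat.cast_le]
      exact (le_csSup hbdd ⟨y, rfl⟩).trans hx.ge
    by_cases hsur : LinearMap.range (φ x) = ⊤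
    · refine ⟨x, x.2, fun w hw => ?_⟩
      obtain ⟨u, hu⟩ := LinearMap.range_eq_top.mp hsur (Submodule.Quotient.mk ⟨w, hw⟩)
      rw [hφ, Submodule.Quotient.eq, mem_submoduleOf_iff] at hu
      have : w = x * u - (x * u - w) := by ring
      rw [this]
      exact Submodule.sub_mem _
        (Submodule.mem_sup_left (Ideal.mul_mem_mul (Ideal.mem_span_singleton_self _) u.2))
        (Submodule.mem_sup_right hu)
    let K : Ideal R := Submodule.comap (LinearMap.lsmul R R (x : R)) L
    have hK : ∀ u, u ∈ K ↔ (x : R) * u ∈ L := fun _ => Iff.rfl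
    have hKer : LinearMap.ker (φ x) = Submodule.submoduleOf K (m ^ p) := by
      ext u
      rw [LinearMap.mem_ker, hφ0, mem_submoduleOf_iff, hK]
    obtain ⟨z, hz, hzle⟩ := ih K (fun u hu => (hK u).mpr (hL (by
        rw [pow_succ']; exact Ideal.mul_mem_mul x.2 hu))) (by
      rw [← hKer, (φ x).quotKerEquivRange.length_eq]
      have h1 := (Submodule.length_lt hsur).trans_le hlen
      rw [Nat.cast_add, Nat.cast_one] at h1
      exact Order.le_of_lt_add_one h1)
    refine ⟨z, hz, ?_⟩
    -- the elements of `m ^ p` killed by `x` modulo `L` are sent into the image of `x`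
    have hswap : ∀ y ∈ m, ∀ u ∈ m ^ p, u ∈ K → ∃ v ∈ m ^ p, y * u - x * v ∈ L := by
      intro y hy u hu huK
      obtain ⟨v, hv⟩ := mem_range_of_maximal_length (φ x) (φ ⟨y, hy⟩) (fun t => by
        have : φ x + t • φ ⟨y, hy⟩ = φ (x + t • ⟨y, hy⟩) := by
          ext u
          simp only [LinearMap.add_apply, LinearMap.smul_apply, hφ]
          rw [← Submodule.Quotient.mk_smul, ← Submodule.Quotient.mk_add]
          congr 1
          ext
          simp [add_mul, mul_assoc]
        rw [this]
        exact hx _) ⟨u, hu⟩ ((hφ0 _ _).mpr ((hK _).mp huK))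
      refine ⟨v, v.2, ?_⟩
      rw [hφ, hφ, eq_comm, Submodule.Quotient.eq, mem_submoduleOf_iff] at hv
      exact hv
    have hdec : ∀ u ∈ m ^ p, ∃ a ∈ m ^ (p - 1), ∃ κ ∈ m ^ p, κ ∈ K ∧ u = z * a + κ := by
      intro u hu
      obtain ⟨_, h1, κ, hκ, rfl⟩ := Submodule.mem_sup.mp (hzle hu)
      obtain ⟨a, ha, rfl⟩ := Ideal.mem_span_singleton_mul.mp h1
      refine ⟨a, ha, κ, ?_, hκ, rfl⟩
      have hza : z * a ∈ m ^ p := by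
        cases p with
        | zero => simp
        | succ q => exact (pow_succ' m q) ▸ Ideal.mul_mem_mul hz ha
      simpa using Submodule.sub_mem _ hu hza
    have hstep : ∀ y ∈ m, ∀ a ∈ m ^ (p - 1), y * a ∈ m ^ p := fun y hy a ha => by
      cases p with
      | zero => simp
      | succ q => exact (pow_succ' m q) ▸ Ideal.mul_mem_mul hy ha
    have hzin : ∀ a ∈ m ^ p, z * a ∈ Ideal.span {z} * m ^ p ⊔ L := fun a ha =>
      Submodule.mem_sup_left (Ideal.mul_mem_mul (Ideal.mem_span_singleton_self _) ha)
    rw [pow_succ', Ideal.mul_le]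
    intro y hy u hu
    obtain ⟨a, ha, κ, hκ, hκK, rfl⟩ := hdec u hu
    obtain ⟨v, hv, hvL⟩ := hswap y hy κ hκ hκK
    obtain ⟨a', ha', κ', hκ', hκK', rfl⟩ := hdec v hv
    -- `x κ'` lies in `L`, so only multiples of `z` remain modulo `L`
    have : y * (z * a + κ) = z * (y * a) + z * (x * a') + (x * κ') +
      (y * κ - x * (z * a' + κ')) := by ring
    rw [this]
    refine Submodule.add_mem _ (Submodule.add_mem _ (Submodule.add_mem _ ?_ ?_) ?_) ?_
    · exact hzin _ (hstep y hy a ha)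
    · exact hzin _ (hstep x x.2 a' ha')
    · exact Submodule.mem_sup_right ((hK _).mp hκK')
    · exact Submodule.mem_sup_right hvL

/-! ### Lengths of quotients -/

section Length

variable {R : Type*} [CommRing R] {M : Type*} [AddCommGroup M] [Module R M]

theorem length_quotient_eq_add {N N' : Submodule R M} (h : N ≤ N') :
    Module.length R (M ⧸ N) =
      Module.length R (N' ⧸ N.submoduleOf N') + Module.length R (M ⧸ N') := by
  refine Module.length_eq_add_of_exact
    (Submodule.mapQ (N.submoduleOf N') N N'.subtype le_rfl) (Submodule.factor h) ?_
    (Submodule.factor_surjective h) ?_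
  · rw [← LinearMap.ker_eq_bot]
    exact Submodule.ker_liftQ_eq_bot _ _ _ (by simp [LinearMap.ker_comp, Submodule.submoduleOf])
  · intro q
    obtain ⟨a, rfl⟩ := Submodule.Quotient.mk_surjective _ q
    constructor
    · intro ha
      have : a ∈ N' := (Submodule.Quotient.mk_eq_zero N').mp ha
      exact ⟨Submodule.Quotient.mk ⟨a, this⟩, rfl⟩
    · rintro ⟨b, hb⟩
      obtain ⟨b, rfl⟩ := Submodule.Quotient.mk_surjective _ b
      rw [← hb]
      exact (Submodule.Quotient.mk_eq_zero N').mpr b.2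

theorem length_quotient_map (f : M →ₗ[R] M) (hf : Function.Injective f) (N : Submodule R M) :
    Module.length R (M ⧸ N.map f) =
      Module.length R (M ⧸ N) + Module.length R (M ⧸ LinearMap.range f) := by
  have hle : N.map f ≤ LinearMap.range f := LinearMap.map_le_range
  refine Module.length_eq_add_of_exact
    (Submodule.mapQ N (N.map f) f (Submodule.le_comap_map _ _)) (Submodule.factor hle) ?_
    (Submodule.factor_surjective hle) ?_
  · rw [← LinearMap.ker_eq_bot]
    refine Submodule.ker_liftQ_eq_bot _ _ _ ?_
    rw [LinearMap.ker_comp, Submodule.ker_mkQ, Submodule.comap_map_eq_of_injective hf]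
  · intro q
    obtain ⟨a, rfl⟩ := Submodule.Quotient.mk_surjective _ q
    constructor
    · intro ha
      obtain ⟨b, rfl⟩ : a ∈ LinearMap.range f := (Submodule.Quotient.mk_eq_zero _).mp ha
      exact ⟨Submodule.Quotient.mk b, rfl⟩
    · rintro ⟨b, hb⟩
      obtain ⟨b, rfl⟩ := Submodule.Quotient.mk_surjective _ b
      rw [← hb]
      exact (Submodule.Quotient.mk_eq_zero _).mpr ⟨b, rfl⟩

/-- Multiplication by `x` identifies `M ⧸ N` with `x M ⧸ x N`. -/
theorem length_quotient_span_smul (x : R) (hx : ∀ v : M, x • v = 0 → v = 0)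
    (N : Submodule R M) :
    Module.length R (M ⧸ Ideal.span {x} • N) =
      Module.length R (M ⧸ N) + Module.length R (M ⧸ Ideal.span {x} • (⊤ : Submodule R M)) := by
  have hmap : ∀ P : Submodule R M, Ideal.span {x} • P = P.map (LinearMap.lsmul R M x) := by
    intro P
    ext v
    rw [Submodule.ideal_span_singleton_smul]
    simp [Submodule.mem_smul_pointwise_iff_exists, Submodule.mem_map]
  have := length_quotient_map (LinearMap.lsmul R M x)
    (by rw [← LinearMap.ker_eq_bot, LinearMap.ker_eq_bot']; exact hx) N
  rwa [← Submodule.map_top, ← hmap, ← hmap] at this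

theorem length_quotient_smul_top_ne_top [Module.Finite R M] (I : Ideal R)
    [IsArtinianRing (R ⧸ I)] : Module.length R (M ⧸ I • (⊤ : Submodule R M)) ≠ ⊤ := by
  rw [Module.length_eq_of_surjective (R := R ⧸ I) (S := R) Ideal.Quotient.mk_surjective]
  have : Module.Finite (R ⧸ I) (M ⧸ I • (⊤ : Submodule R M)) :=
    Module.Finite.of_restrictScalars_finite R _ _
  exact Module.length_ne_top

end Length

/-! ### Principal reductions in dimension one -/

section Local
variable {R : Type*} [CommRing R] [IsLocalRing R]

/-- Nakayama: a finitely generated module `N` over a local ring is minimally generated by as many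
elements as the length of `N ⧸ 𝔪 N`. -/
theorem sInf_card_eq_length {M : Type*} [AddCommGroup M] [Module R M] {N : Submodule R M}
    (hN : N.FG) :
    ((sInf {n | ∃ s : Finset M, s.card = n ∧ Submodule.span R (s : Set M) = N} : ℕ) : ℕ∞) =
      Module.length R (N ⧸ maximalIdeal R • (⊤ : Submodule R N)) := by
  have h1 : sInf {n | ∃ s : Finset M, s.card = n ∧ Submodule.span R (s : Set M) = N} =
      N.spanFinrank := by
    apply le_antisymm
    · obtain ⟨s, hs⟩ := hN.exists_span_finset_card_eq_spanFinrank
      exact Nat.sInf_le ⟨s, hs⟩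
    · obtain ⟨s, hs, hs'⟩ := Nat.sInf_mem (s := {n | ∃ s : Finset M, s.card = n ∧
        Submodule.span R (s : Set M) = N}) (by
          obtain ⟨s, hs⟩ := hN
          exact ⟨_, s, rfl, hs⟩)
      rw [← hs, ← hs', ← Set.ncard_coe_finset]
      exact Submodule.spanFinrank_span_le_ncard_of_finite s.finite_toSet
  rw [h1, IsLocalRing.spanFinrank_eq_finrank_quotient N hN,
    Module.length_eq_of_surjective (R := R ⧸ maximalIdeal R) (S := R) Ideal.Quotient.mk_surjective]
  let _ : Field (R ⧸ maximalIdeal R) := Ideal.Quotient.field _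
  have : Module.Finite R N := Module.Finite.iff_fg.mpr hN
  have : Module.Finite (R ⧸ maximalIdeal R) (N ⧸ maximalIdeal R • (⊤ : Submodule R N)) :=
    Module.Finite.of_restrictScalars_finite R _ _
  exact (Module.length_eq_finrank _ _).symm

theorem mu_eq_length (M : Type*) [AddCommGroup M] [Module R M] [Module.Finite R M] :
    (mu R M : ℕ∞) = Module.length R (M ⧸ maximalIdeal R • (⊤ : Submodule R M)) := by
  have h := sInf_card_eq_length (R := R) (Module.Finite.fg_top (R := R) (M := M))
  rw [mu, h]
  refine (Submodule.Quotient.equiv _ _ Submodule.topEquiv ?_).length_eq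
  rw [Submodule.map_smul'', Submodule.map_top, LinearEquiv.range]

theorem embdim_add_length [IsNoetherianRing R] :
    Module.length R (R ⧸ maximalIdeal R ^ 2) =
      embdim R + Module.length R (R ⧸ maximalIdeal R) := by
  have h : (embdim R : ℕ∞) = _ :=
    sInf_card_eq_length (R := R) (maximalIdeal R).fg_of_isNoetherianRing
  have e : Submodule.submoduleOf (maximalIdeal R ^ 2) (maximalIdeal R) =
      maximalIdeal R • (⊤ : Submodule R (maximalIdeal R)) := by
    ext v
    rw [mem_submoduleOf_iff, Submodule.mem_smul_top_iff, pow_two]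
    rfl
  rw [h, length_quotient_eq_add (Ideal.pow_le_self two_ne_zero), e]

theorem isArtinianRing_quotient_pow [IsNoetherianRing R] (n : ℕ) :
    IsArtinianRing (R ⧸ maximalIdeal R ^ n) := by
  rcases n with _ | n
  · have : Subsingleton (R ⧸ maximalIdeal R ^ 0) := Ideal.Quotient.subsingleton_iff.mpr (by simp)
    infer_instance
  · refine IsLocalRing.quotient_artinian_of_mem_minimalPrimes_of_isLocalRing _
      ⟨⟨inferInstance, Ideal.pow_le_self n.succ_ne_zero⟩, fun q hq _ => ?_⟩
    exact hq.1.le_of_pow_le hq.2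

omit [IsLocalRing R] in
theorem isArtinianRing_quotient_span [IsNoetherianRing R] (hdim : ringKrullDim R = 1) {r : R}
    (hr : r ∈ nonZeroDivisors R) : IsArtinianRing (R ⧸ Ideal.span {r}) := by
  rw [isArtinianRing_iff_krullDimLE_zero, Ring.krullDimLE_iff]
  have h := ringKrullDim_quotient_succ_le_of_nonZeroDivisor hr
  rw [hdim] at h
  generalize ringKrullDim (R ⧸ Ideal.span {r}) = d at h ⊢
  induction d with
  | bot => exact bot_le
  | coe d =>
    have h' : d + 1 ≤ 1 := by exact_mod_cast h
    have : d ≤ 0 := (ENat.add_le_add_iff_right (k := 1) ENat.one_ne_top).mp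
      (h'.trans_eq (zero_add 1).symm)
    exact_mod_cast this

/-- If `r` is a parameter, the Hilbert function of `R` is bounded by the length of `R / (r)`. -/
theorem length_pow_quotient_le [IsNoetherianRing R] {r : R} (hrm : r ∈ maximalIdeal R)
    (hr0 : ∀ v : R, r • v = 0 → v = 0) (n : ℕ) :
    Module.length R (↥(maximalIdeal R ^ n) ⧸
        Submodule.submoduleOf (maximalIdeal R ^ (n + 1)) (maximalIdeal R ^ n)) ≤
      Module.length R (R ⧸ Ideal.span {r} • (⊤ : Ideal R)) := by
  set m := maximalIdeal R with hm
  have hpow : m ^ (n + 1) ≤ m ^ n := Ideal.pow_le_pow_right n.le_succ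
  have hrle : Ideal.span {r} • m ^ n ≤ m ^ (n + 1) := by
    rw [pow_succ', smul_eq_mul]
    exact Ideal.mul_mono_left ((Ideal.span_singleton_le_iff_mem _).mpr hrm)
  have h1 := length_quotient_span_smul r hr0 (m ^ n)
  rw [length_quotient_eq_add (hrle.trans hpow), add_comm] at h1
  have hart' := isArtinianRing_quotient_pow (R := R) n
  have h2 : Module.length R (R ⧸ m ^ n) ≠ ⊤ := by
    have := length_quotient_smul_top_ne_top (R := R) (M := R) (m ^ n)
    rwa [smul_eq_mul, Ideal.mul_top] at this
  rw [← ENat.add_right_injective_of_ne_top h2 h1]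
  exact Module.length_le_of_surjective
    (Submodule.factor (Submodule.comap_mono hrle)) (Submodule.factor_surjective _)

/-- If the lengths of `𝔪 ^ n ⧸ 𝔪 ^ (n + 1)` are bounded by `C`, the hypothesis of
`exists_pow_le_span_mul_sup` holds for `n = C + 1` and `L = 𝔪 ^ (C + 2)`, and `L` is then removed
by Nakayama. -/
theorem exists_pow_le_span_mul [IsNoetherianRing R] [Infinite (ResidueField R)]
    (hdim : ringKrullDim R = 1) {r : R} (hrm : r ∈ maximalIdeal R) (hr : r ∈ nonZeroDivisors R) :
    ∃ x ∈ maximalIdeal R, ∃ C : ℕ,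
      maximalIdeal R ^ (C + 1) ≤ Ideal.span {x} * maximalIdeal R ^ C := by
  have hart := isArtinianRing_quotient_span hdim hr
  have hr0 : ∀ v : R, r • v = 0 → v = 0 := fun v hv => by
    rw [smul_eq_mul, mul_comm] at hv
    exact (mem_nonZeroDivisors_iff_right.mp hr) v hv
  have hfin : Module.length R (R ⧸ Ideal.span {r} • (⊤ : Ideal R)) ≠ ⊤ :=
    length_quotient_smul_top_ne_top _
  obtain ⟨C, hC⟩ := ENat.ne_top_iff_exists.mp hfin
  have hb := length_pow_quotient_le hrm hr0 (C + 1)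
  rw [← hC] at hb
  obtain ⟨x, hx, hle⟩ := exists_pow_le_span_mul_sup (R := R) (C + 1)
    (maximalIdeal R ^ (C + 1 + 1)) le_rfl (hb.trans (by exact_mod_cast C.le_succ))
  refine ⟨x, hx, C, Submodule.le_of_le_smul_of_le_jacobson_bot (I := maximalIdeal R)
    (IsNoetherian.noetherian _) (IsLocalRing.maximalIdeal_le_jacobson _) ?_⟩
  rw [smul_eq_mul, ← pow_succ']
  exact hle

omit [IsLocalRing R] in
theorem pow_mem_span_of_pow_le {m : Ideal R} {r x : R} {C : ℕ} (hr : r ∈ m)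
    (hle : m ^ (C + 1) ≤ Ideal.span {x} * m ^ C) : r ^ (C + 1) ∈ Ideal.span {x} := by
  have h := hle (Ideal.pow_mem_pow hr (C + 1))
  exact Ideal.mul_le_left h

/-- The maximal ideal of a one-dimensional Cohen–Macaulay local ring with infinite residue field
has a principal reduction, generated by a regular element. -/
theorem exists_reduction [IsNoetherianRing R] [Infinite (ResidueField R)]
    (hdim : ringKrullDim R = 1) (hCM : ∃ r ∈ maximalIdeal R, r ∈ nonZeroDivisors R) :
    ∃ x ∈ maximalIdeal R, x ∈ nonZeroDivisors R ∧
      ∃ n₀ : ℕ, ∀ n ≥ n₀, maximalIdeal R ^ (n + 1) = Ideal.span {x} * maximalIdeal R ^ n := by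
  obtain ⟨r, hrm, hr⟩ := hCM
  obtain ⟨x, hx, C, hle⟩ := exists_pow_le_span_mul hdim hrm hr
  have heq : ∀ n ≥ C, maximalIdeal R ^ (n + 1) = Ideal.span {x} * maximalIdeal R ^ n := by
    intro n hn
    obtain ⟨j, rfl⟩ := Nat.exists_eq_add_of_le hn
    apply le_antisymm
    · rw [add_right_comm, pow_add _ (C + 1) j, pow_add _ C j, ← mul_assoc]
      exact Ideal.mul_mono_left hle
    · rw [pow_succ']
      exact Ideal.mul_mono_left ((Ideal.span_singleton_le_iff_mem _).mpr hx)
  refine ⟨x, hx, ?_, C, heq⟩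
  -- a power of the regular element `r` is a multiple of `x`, so `x` is regular
  have hmem : r ^ (C + 1) ∈ Ideal.span {x} := pow_mem_span_of_pow_le hrm hle
  obtain ⟨a, ha⟩ := Ideal.mem_span_singleton'.mp hmem
  have hpow := pow_mem hr (C + 1)
  rw [← ha] at hpow
  exact (mul_mem_nonZeroDivisors.mp hpow).2

end Local

/-! ### Lengths and generators over the idealization -/

section Idealization

variable {R : Type*} [CommRing R] {M : Type*} [AddCommGroup M] [Module R M] [Module Rᵐᵒᵖ M]
  [IsCentralScalar R M]

open TrivSqZeroExt

/-- The length of a quotient of `R ⋉ M` by an ideal of the form `I ⊕ N`. It is read off from the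
exact sequence `0 → M ⧸ N → (R ⋉ M) ⧸ J → R ⧸ I → 0` of `R ⋉ M`-modules, where `R ⋉ M` acts on the
outer terms through the projection onto `R`. -/
theorem length_idealization_quotient {J : Ideal (TrivSqZeroExt R M)} {I : Ideal R}
    {N : Submodule R M} (hJ : ∀ a, a ∈ J ↔ a.fst ∈ I ∧ a.snd ∈ N) :
    Module.length (TrivSqZeroExt R M) (TrivSqZeroExt R M ⧸ J) =
      Module.length R (R ⧸ I) + Module.length R (M ⧸ N) := by
  let _ : Algebra (TrivSqZeroExt R M) R := algebraBase R M
  let _ : Module (TrivSqZeroExt R M) (M ⧸ N) := Module.compHom _ (fstHom R R M).toRingHom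
  have : IsScalarTower (TrivSqZeroExt R M) R (M ⧸ N) := ⟨fun a r v => mul_smul a.fst r v⟩
  have hsurj : Function.Surjective (algebraMap (TrivSqZeroExt R M) R) := fun r => ⟨inl r, rfl⟩
  rw [← Module.length_eq_of_surjective (M := M ⧸ N) hsurj,
    ← Module.length_eq_of_surjective (M := R ⧸ I) hsurj, add_comm]
  let f₀ : M ⧸ N →ₗ[R] TrivSqZeroExt R M ⧸ J :=
    N.liftQ ((J.mkQ.restrictScalars R) ∘ₗ inrHom R M) fun v hv =>
      (Submodule.Quotient.mk_eq_zero J).mpr ((hJ _).mpr ⟨I.zero_mem, hv⟩)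
  let f : M ⧸ N →ₗ[TrivSqZeroExt R M] TrivSqZeroExt R M ⧸ J :=
    { f₀ with
      map_smul' := by
        intro a v
        obtain ⟨v, rfl⟩ := Submodule.Quotient.mk_surjective _ v
        change Submodule.Quotient.mk (inr (a.fst • v)) =
          (Submodule.Quotient.mk (a * inr v) : TrivSqZeroExt R M ⧸ J)
        congr 1
        ext <;> simp }
  let g : TrivSqZeroExt R M ⧸ J →ₗ[TrivSqZeroExt R M] R ⧸ I :=
    J.liftQ
      { toFun := fun a => (Submodule.Quotient.mk a.fst : R ⧸ I)
        map_add' := fun a b => rfl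
        map_smul' := fun a b => rfl }
      fun a ha => (Submodule.Quotient.mk_eq_zero I).mpr ((hJ a).mp ha).1
  refine Module.length_eq_add_of_exact f g ?_ ?_ ?_
  · rw [injective_iff_map_eq_zero]
    intro v hv
    obtain ⟨v, rfl⟩ := Submodule.Quotient.mk_surjective _ v
    exact (Submodule.Quotient.mk_eq_zero N).mpr
      ((hJ (inr v)).mp ((Submodule.Quotient.mk_eq_zero J).mp hv)).2
  · intro r
    obtain ⟨r, rfl⟩ := Submodule.Quotient.mk_surjective _ r
    exact ⟨Submodule.Quotient.mk (inl r), rfl⟩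
  · intro a
    obtain ⟨a, rfl⟩ := Submodule.Quotient.mk_surjective _ a
    constructor
    · intro ha
      have ha' : a.fst ∈ I := (Submodule.Quotient.mk_eq_zero I).mp ha
      refine ⟨Submodule.Quotient.mk a.snd, ?_⟩
      change Submodule.Quotient.mk (inr a.snd) = (Submodule.Quotient.mk a : TrivSqZeroExt R M ⧸ J)
      rw [Submodule.Quotient.eq, hJ]
      simp [ha']
    · rintro ⟨v, hv⟩
      obtain ⟨v, rfl⟩ := Submodule.Quotient.mk_surjective _ v
      rw [← hv]
      exact (Submodule.Quotient.mk_eq_zero I).mpr I.zero_mem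

variable [IsLocalRing R] [IsLocalRing (TrivSqZeroExt R M)]

theorem mem_maximalIdeal_idealization {a : TrivSqZeroExt R M} :
    a ∈ maximalIdeal (TrivSqZeroExt R M) ↔ a.fst ∈ maximalIdeal R := by
  rw [mem_maximalIdeal, mem_maximalIdeal, mem_nonunits_iff, mem_nonunits_iff,
    isUnit_iff_isUnit_fst]

theorem inl_mem_maximalIdeal_pow {k : ℕ} {r : R} (hr : r ∈ maximalIdeal R ^ k) :
    (inl r : TrivSqZeroExt R M) ∈ maximalIdeal (TrivSqZeroExt R M) ^ k := by
  have h : (maximalIdeal R).map (algebraMap R (TrivSqZeroExt R M)) ≤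
      maximalIdeal (TrivSqZeroExt R M) :=
    Ideal.map_le_iff_le_comap.mpr fun s hs => mem_maximalIdeal_idealization.mpr hs
  have h' := Ideal.mem_map_of_mem (algebraMap R (TrivSqZeroExt R M)) hr
  rw [Ideal.map_pow] at h'
  exact Ideal.pow_right_mono h k h'

theorem inr_mem_maximalIdeal_pow {k : ℕ} {v : M}
    (hv : v ∈ maximalIdeal R ^ k • (⊤ : Submodule R M)) :
    (inr v : TrivSqZeroExt R M) ∈ maximalIdeal (TrivSqZeroExt R M) ^ (k + 1) := by
  induction hv using Submodule.smul_induction_on' with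
  | smul r hr w _ =>
    rw [← inl_mul_inr, pow_succ]
    exact Ideal.mul_mem_mul (inl_mem_maximalIdeal_pow hr)
      (mem_maximalIdeal_idealization.mpr (Submodule.zero_mem _))
  | add x _ y _ hx hy =>
    rw [inr_add]
    exact Ideal.add_mem _ hx hy

/-- The powers of the maximal ideal of `R ⋉ M` are `𝔪 ^ (k + 1) ⊕ 𝔪 ^ k M`. -/
theorem mem_maximalIdeal_idealization_pow {k : ℕ} {a : TrivSqZeroExt R M} :
    a ∈ maximalIdeal (TrivSqZeroExt R M) ^ (k + 1) ↔
      a.fst ∈ maximalIdeal R ^ (k + 1) ∧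
        a.snd ∈ maximalIdeal R ^ k • (⊤ : Submodule R M) := by
  constructor
  · induction k generalizing a with
    | zero =>
      intro ha
      rw [zero_add, pow_one, mem_maximalIdeal_idealization] at ha
      simpa using ha
    | succ k ih =>
      intro ha
      rw [pow_succ'] at ha
      induction ha using Submodule.mul_induction_on' with
      | mem_mul_mem b hb c hc =>
        rw [mem_maximalIdeal_idealization] at hb
        obtain ⟨hc1, hc2⟩ := ih hc
        refine ⟨?_, ?_⟩
        · rw [fst_mul, pow_succ']
          exact Ideal.mul_mem_mul hb hc1
        · rw [snd_mul, op_smul_eq_smul]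
          refine Submodule.add_mem _ ?_ (Submodule.smul_mem_smul hc1 trivial)
          rw [pow_succ', mul_smul]
          exact Submodule.smul_mem_smul hb hc2
      | add x _ y _ hx hy =>
        exact ⟨Ideal.add_mem _ hx.1 hy.1, Submodule.add_mem _ hx.2 hy.2⟩
  · rintro ⟨h1, h2⟩
    rw [← inl_fst_add_inr_snd_eq a]
    exact Ideal.add_mem _ (inl_mem_maximalIdeal_pow h1) (inr_mem_maximalIdeal_pow h2)

theorem length_idealization_quotient_pow (k : ℕ) :
    Module.length (TrivSqZeroExt R M)
        (TrivSqZeroExt R M ⧸ maximalIdeal (TrivSqZeroExt R M) ^ (k + 1)) =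
      Module.length R (R ⧸ maximalIdeal R ^ (k + 1)) +
        Module.length R (M ⧸ maximalIdeal R ^ k • (⊤ : Submodule R M)) :=
  length_idealization_quotient fun _ => mem_maximalIdeal_idealization_pow

omit [IsLocalRing R] [IsLocalRing (TrivSqZeroExt R M)] in
theorem isNoetherianRing_idealization [IsNoetherianRing R] [Module.Finite R M] :
    IsNoetherianRing (TrivSqZeroExt R M) := by
  have : Module.Finite R (TrivSqZeroExt R M) := inferInstanceAs (Module.Finite R (R × M))
  have : IsNoetherian R (TrivSqZeroExt R M) := isNoetherian_of_isNoetherianRing_of_finite R _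
  exact isNoetherian_of_tower R this

/-- `embdim (R ⋉ M) = embdim R + μ(M)`, from comparing the lengths of `(R ⋉ M) ⧸ 𝔫 ^ 2` and
`(R ⋉ M) ⧸ 𝔫` with those of `R ⧸ 𝔪 ^ 2`, `M ⧸ 𝔪 M` and `R ⧸ 𝔪`. -/
theorem embdim_idealization [IsNoetherianRing R] [Module.Finite R M] :
    embdim (TrivSqZeroExt R M) = embdim R + mu R M := by
  have := isNoetherianRing_idealization (R := R) (M := M)
  have h1 := length_idealization_quotient_pow (R := R) (M := M) 1
  have h0 := length_idealization_quotient_pow (R := R) (M := M) 0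
  have hzero : Module.length R (M ⧸ (⊤ : Submodule R M)) = 0 := Module.length_eq_zero
  rw [zero_add, pow_one, pow_one, pow_zero, Ideal.one_eq_top, Submodule.top_smul, hzero,
    add_zero] at h0
  rw [one_add_one_eq_two, pow_one, embdim_add_length, embdim_add_length, h0,
    ← mu_eq_length, add_right_comm] at h1
  have hfin : Module.length R (R ⧸ maximalIdeal R) ≠ ⊤ := by
    have := isArtinianRing_quotient_pow (R := R) 1
    have h := length_quotient_smul_top_ne_top (R := R) (M := R) (maximalIdeal R ^ 1)
    rwa [smul_eq_mul, Ideal.mul_top, pow_one] at h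
  exact_mod_cast ENat.add_left_injective_of_ne_top hfin h1

end Idealization

/-! ### Multiplicities -/

section Multiplicity
theorem length_quotient_smul_self {R : Type*} [CommRing R] (I : Ideal R) :
    Module.length R (R ⧸ I • (⊤ : Submodule R R)) = Module.length R (R ⧸ I) := by
  rw [smul_eq_mul, Ideal.mul_top]

theorem hsMult_eq_s8 {R : Type*} [CommRing R] {M : Type*} [AddCommGroup M] [Module R M] {I : Ideal R}
    {e : ℕ∞} (hfin : ∀ n, Module.length R (M ⧸ I ^ n • (⊤ : Submodule R M)) ≠ ⊤) {n₀ : ℕ}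
    (h : ∀ n ≥ n₀, Module.length R (M ⧸ I ^ (n + 1) • (⊤ : Submodule R M)) =
      Module.length R (M ⧸ I ^ n • (⊤ : Submodule R M)) + e) : hsMult R I M = e := by
  have hex : ∃ e : ℕ∞, ∀ᶠ n in atTop,
      mlen R (M ⧸ (I ^ (n + 1) • (⊤ : Submodule R M))) =
        mlen R (M ⧸ (I ^ n • (⊤ : Submodule R M))) + (e : WithBot ℕ∞) := by
    refine ⟨e, eventually_atTop.mpr ⟨n₀, fun n hn => ?_⟩⟩
    rw [mlen, mlen, ← Module.coe_length, ← Module.coe_length, h n hn, WithBot.coe_add]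
  rw [hsMult, dif_pos hex]
  -- the eventual increment is unique because the lengths are finite
  obtain ⟨n₁, hn₁⟩ := eventually_atTop.mp hex.choose_spec
  have h1 := hn₁ _ (le_max_right n₀ n₁)
  rw [mlen, mlen, ← Module.coe_length, ← Module.coe_length, ← WithBot.coe_add, WithBot.coe_inj,
    h _ (le_max_left n₀ n₁)] at h1
  exact (ENat.add_right_injective_of_ne_top (hfin _) h1).symm

variable {R : Type*} [CommRing R] {M : Type*} [AddCommGroup M] [Module R M]

/-- Along a principal reduction the Hilbert–Samuel function of `M` grows by the length of
`M ⧸ x M`. -/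
theorem length_quotient_pow_succ {m : Ideal R} {x : R} (hx : ∀ v : M, x • v = 0 → v = 0) {n : ℕ}
    (h : m ^ (n + 1) = Ideal.span {x} * m ^ n) :
    Module.length R (M ⧸ m ^ (n + 1) • (⊤ : Submodule R M)) =
      Module.length R (M ⧸ m ^ n • (⊤ : Submodule R M)) +
        Module.length R (M ⧸ Ideal.span {x} • (⊤ : Submodule R M)) := by
  rw [h, mul_smul, length_quotient_span_smul x hx]

variable [IsLocalRing R] [IsNoetherianRing R]

theorem length_quotient_pow_ne_top [Module.Finite R M] (n : ℕ) :
    Module.length R (M ⧸ maximalIdeal R ^ n • (⊤ : Submodule R M)) ≠ ⊤ := by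
  have := isArtinianRing_quotient_pow (R := R) n
  exact length_quotient_smul_top_ne_top _

omit [IsNoetherianRing R] in
theorem mu_le_length [Module.Finite R M] {x : R} (hx : x ∈ maximalIdeal R) :
    (mu R M : ℕ∞) ≤ Module.length R (M ⧸ Ideal.span {x} • (⊤ : Submodule R M)) := by
  rw [mu_eq_length]
  have hle : Ideal.span {x} • (⊤ : Submodule R M) ≤ maximalIdeal R • ⊤ :=
    Submodule.smul_mono_left ((Ideal.span_singleton_le_iff_mem _).mpr hx)
  exact Module.length_le_of_surjective (Submodule.factor hle) (Submodule.factor_surjective _)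

/-- Abhyankar's inequality `embdim R ≤ e(R)` in dimension one: both sides are compared with the
length of `R ⧸ x 𝔪`. -/
theorem embdim_le_length {x : R} (hx : x ∈ maximalIdeal R) (hx0 : ∀ v : R, x • v = 0 → v = 0) :
    (embdim R : ℕ∞) ≤ Module.length R (R ⧸ Ideal.span {x} • (⊤ : Submodule R R)) := by
  have hfin := length_quotient_pow_ne_top (R := R) (M := R) 1
  rw [pow_one, smul_eq_mul, Ideal.mul_top] at hfin
  have hle : Ideal.span {x} • maximalIdeal R ≤ maximalIdeal R ^ 2 := by
    rw [pow_two, smul_eq_mul]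
    exact Ideal.mul_mono_left ((Ideal.span_singleton_le_iff_mem _).mpr hx)
  have h := Module.length_le_of_surjective (Submodule.factor hle) (Submodule.factor_surjective hle)
  rw [embdim_add_length, length_quotient_span_smul x hx0, add_comm] at h
  exact (ENat.add_le_add_iff_left hfin).mp h

end Multiplicity

/-- the idealization `A = R ⋉ M` has minimal multiplicity as a ring iff `R` has
minimal multiplicity and `M` is an Ulrich `R`-module (`e_R(M) = μ_R(M)`). -/
theorem stmt8 (R : Type*) [CommRing R] [IsLocalRing R] [IsNoetherianRing R]
    [Infinite (ResidueField R)]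
    (hdim : ringKrullDim R = 1)
    (hCM : ∃ r ∈ maximalIdeal R, r ∈ nonZeroDivisors R)
    (M : Type*) [AddCommGroup M] [Module R M] [Module Rᵐᵒᵖ M] [IsCentralScalar R M]
    [Module.Finite R M] (hTF : TorsionFree R M)
    [IsLocalRing (TrivSqZeroExt R M)] :
    hsMult (TrivSqZeroExt R M) (maximalIdeal (TrivSqZeroExt R M)) (TrivSqZeroExt R M) =
        (embdim (TrivSqZeroExt R M) : ℕ∞) ↔
      (hsMult R (maximalIdeal R) R = (embdim R : ℕ∞) ∧
        hsMult R (maximalIdeal R) M = (mu R M : ℕ∞)) := by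

  obtain ⟨x, hxm, hx, n₀, hred⟩ := exists_reduction hdim hCM
  have hxR : ∀ v : R, x • v = 0 → v = 0 := fun v hv => by
    rw [smul_eq_mul, mul_comm] at hv
    exact (mem_nonZeroDivisors_iff_right.mp hx) v hv
  have hxM : ∀ v : M, x • v = 0 → v = 0 := hTF x hx
  have := isArtinianRing_quotient_span hdim hx
  have := isNoetherianRing_idealization (R := R) (M := M)
  have hstepR := fun n hn => length_quotient_pow_succ (M := R) hxR (hred n hn)
  have hstepM := fun n hn => length_quotient_pow_succ (M := M) hxM (hred n hn)
  have heR := hsMult_eq_s8 length_quotient_pow_ne_top hstepR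
  have heM := hsMult_eq_s8 length_quotient_pow_ne_top hstepM
  have heA := hsMult_eq_s8 (R := TrivSqZeroExt R M) (M := TrivSqZeroExt R M) (n₀ := n₀ + 1)
    (e := Module.length R (R ⧸ Ideal.span {x} • (⊤ : Submodule R R)) +
      Module.length R (M ⧸ Ideal.span {x} • (⊤ : Submodule R M)))
    length_quotient_pow_ne_top (by
      intro n hn
      obtain ⟨k, rfl⟩ := Nat.exists_eq_add_of_le' (Nat.one_le_of_lt hn)
      have h1 := hstepR (k + 1) (by omega)
      rw [length_quotient_smul_self, length_quotient_smul_self] at h1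
      rw [length_quotient_smul_self, length_quotient_smul_self,
        length_idealization_quotient_pow, length_idealization_quotient_pow, h1,
        hstepM k (by omega), add_add_add_comm])
  have hle1 := embdim_le_length hxm hxR
  have hle2 := mu_le_length (M := M) hxm
  have hfin1 := length_quotient_smul_top_ne_top (M := R) (Ideal.span {x})
  have hfin2 := length_quotient_smul_top_ne_top (M := M) (Ideal.span {x})
  rw [heR, heM, heA, embdim_idealization]
  -- `e(R ⋉ M) = e(R) + e(M)` and `embdim (R ⋉ M) = embdim R + μ(M)`, with termwise inequalities
  generalize Module.length R (R ⧸ Ideal.span {x} • (⊤ : Submodule R R)) = a at *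
  generalize Module.length R (M ⧸ Ideal.span {x} • (⊤ : Submodule R M)) = b at *
  lift a to ℕ using hfin1
  lift b to ℕ using hfin2
  norm_cast at *
  omega
end
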